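/- Let l₁ = (3/5, 4/5), l₂ = (1, 0), with l^⊥ = (−b, a) for l = (a,b), and let R₁^o, R₂^o be the Fourier multiplier operators on 𝕋² with symbols 25(k₂² − k₁²)/(12|k|²) and 7(k₂² − k₁²)/(12|k|²) + 4k₁k₂/|k|² respectively (k ≠ 0, annihilating the k = 0 mode). Then for every Q ∈ C^∞(𝕋²) with zero mean: (a) ∑_{j=1}^{2} (l_j^⊥·∇)(l_j·∇)(R_j^o Q) = ΔQ; and consequently (b) there exists a smooth scalar function p on 𝕋² such that ∑_{j=1}^{2} l_j^⊥ (l_j·∇)(R_j^o Q) = ∇Q + ∇^⊥ p, where ∇^⊥ = (−∂₂, ∂₁). -/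

import Mathlib

open MeasureTheory Complex Filter

noncomputable section

abbrev Z2 := ℤ × ℤ

/-- dot product of an integer frequency with a point of `ℝ²` -/
def dotZ (k : Z2) (x : ℝ × ℝ) : ℝ := (k.1 : ℝ) * x.1 + (k.2 : ℝ) * x.2

/-- Euclidean norm of an integer frequency -/
def knorm (k : Z2) : ℝ := Real.sqrt ((k.1 : ℝ) ^ 2 + (k.2 : ℝ) ^ 2)

/-- Euclidean norm on `ℝ²` (realized as `ℝ × ℝ`) -/
def e2 (x : ℝ × ℝ) : ℝ := Real.sqrt (x.1 ^ 2 + x.2 ^ 2)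

/-- the fundamental domain `[-π, π]²` of the torus -/
def Q2 : Set (ℝ × ℝ) := Set.Icc (-Real.pi, -Real.pi) (Real.pi, Real.pi)

/-- `2π`-periodicity in both variables -/
def Periodic2 (f : ℝ × ℝ → ℂ) : Prop :=
  ∀ x : ℝ × ℝ, f (x.1 + 2 * Real.pi, x.2) = f x ∧ f (x.1, x.2 + 2 * Real.pi) = f x

def RealValued (f : ℝ × ℝ → ℂ) : Prop := ∀ x, (f x).im = 0

/-- Fourier coefficient `f̂(k) = (2π)⁻² ∫_{𝕋²} f(x) e^{-ik⋅x} dx` -/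
def fCoeff (f : ℝ × ℝ → ℂ) (k : Z2) : ℂ :=
  (1 / (2 * Real.pi) ^ 2 : ℂ) * ∫ x in Q2, f x * Complex.exp (-Complex.I * (dotZ k x : ℝ))

/-- Fourier multiplier operator with symbol `m` -/
def Tmult (m : Z2 → ℂ) (f : ℝ × ℝ → ℂ) : ℝ × ℝ → ℂ :=
  fun x => ∑' k : Z2, m k * fCoeff f k * Complex.exp (Complex.I * (dotZ k x : ℝ))

/-- `Λ^s = (-Δ)^{s/2}`, the multiplier with symbol `|k|^s` (killing `k = 0` for `s ≤ 0`) -/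
def Lam (s : ℝ) : (ℝ × ℝ → ℂ) → (ℝ × ℝ → ℂ) :=
  Tmult fun k => if k = 0 then 0 else ((knorm k ^ s : ℝ) : ℂ)

/-- symbol of the Riesz transform `R_j`, `i k_j / |k|` -/
def rieszSym (j : Fin 2) (k : Z2) : ℂ :=
  if k = 0 then 0
  else Complex.I * ((if j = 0 then (k.1 : ℝ) else (k.2 : ℝ)) : ℂ) / ((knorm k : ℝ) : ℂ)

/-- the Riesz transform `R_j` -/
def Riesz (j : Fin 2) : (ℝ × ℝ → ℂ) → (ℝ × ℝ → ℂ) := Tmult (rieszSym j)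

/-- symbol of the modified Riesz-type transforms `R_j^o` of Lemma 2.2 -/
def RoSym (j : Fin 2) (k : Z2) : ℝ :=
  if k = 0 then 0
  else if j = 0 then 25 * ((k.2 : ℝ) ^ 2 - (k.1 : ℝ) ^ 2) / (12 * ((k.1 : ℝ) ^ 2 + (k.2 : ℝ) ^ 2))
  else 7 * ((k.2 : ℝ) ^ 2 - (k.1 : ℝ) ^ 2) / (12 * ((k.1 : ℝ) ^ 2 + (k.2 : ℝ) ^ 2))
      + 4 * (k.1 : ℝ) * (k.2 : ℝ) / ((k.1 : ℝ) ^ 2 + (k.2 : ℝ) ^ 2)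

/-- the Riesz-type transforms `R_j^o` -/
def Ro (j : Fin 2) : (ℝ × ℝ → ℂ) → (ℝ × ℝ → ℂ) := Tmult fun k => ((RoSym j k : ℝ) : ℂ)

/-- symbol of `Δ⁻¹` (mean annihilated) -/
def deltaInvSym (k : Z2) : ℂ := if k = 0 then 0 else -1 / ((knorm k ^ 2 : ℝ) : ℂ)

/-- directional derivative `(v ⋅ ∇) f` -/
def dirD (v : ℝ × ℝ) (f : ℝ × ℝ → ℂ) : ℝ × ℝ → ℂ := fun x => fderiv ℝ f x v

/-- partial derivative `∂_j f` -/
def pd (j : Fin 2) (f : ℝ × ℝ → ℂ) : ℝ × ℝ → ℂ :=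
  dirD (if j = 0 then ((1 : ℝ), (0 : ℝ)) else ((0 : ℝ), (1 : ℝ))) f

/-- sup norm on the torus -/
def supNorm (f : ℝ × ℝ → ℂ) : ℝ := ⨆ x : ℝ × ℝ, ‖f x‖

/-- the `X`-norm `‖q‖_X = ‖q‖_∞ + ‖R₁^o q‖_∞ + ‖R₂^o q‖_∞` -/
def Xnorm (q : ℝ × ℝ → ℂ) : ℝ := supNorm q + supNorm (Ro 0 q) + supNorm (Ro 1 q)

/-- the vectors `l₁ = (3/5, 4/5)` and `l₂ = (1,0)` -/
def l1 : ℝ × ℝ := (3 / 5, 4 / 5)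
def l2 : ℝ × ℝ := (1, 0)

/-- the rotation `l ↦ l^⊥` -/
def perp (l : ℝ × ℝ) : ℝ × ℝ := (-l.2, l.1)

/-- symbol view of frequencies as real vectors -/
def toR (k : Z2) : ℝ × ℝ := ((k.1 : ℝ), (k.2 : ℝ))

/-- the operator `T^{(1)}_{λl}` (where `κ = λl ∈ ℤ²`) -/
def T1op (κ : Z2) (lam : ℝ) : (ℝ × ℝ → ℂ) → (ℝ × ℝ → ℂ) :=
  Tmult fun k => (((knorm (κ + k) + knorm (κ - k)) / 2 - lam : ℝ) : ℂ)

/-- the operator `T^{(2)}_{λl}` (where `κ = λl ∈ ℤ²`) -/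
def T2op (κ : Z2) (l : ℝ × ℝ) : (ℝ × ℝ → ℂ) → (ℝ × ℝ → ℂ) :=
  Tmult fun k =>
    Complex.I * (((knorm (κ + k) - knorm (κ - k)) / 2 - (l.1 * (k.1 : ℝ) + l.2 * (k.2 : ℝ)) : ℝ) : ℂ)

/-- the functions `a_j = 2 √(r/den) √(C₀ + R_j^o q / r)` -/
def aPerf (q : ℝ × ℝ → ℂ) (r den C₀ : ℝ) (j : Fin 2) : ℝ × ℝ → ℂ :=
  fun x => ((2 * Real.sqrt (r / den) * Real.sqrt (C₀ + (Ro j q x).re / r) : ℝ) : ℂ)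

/-- `λ_n = ⌈λ₀^{bⁿ}⌉` -/
def lamSeq (lam0 : ℕ) (b : ℝ) (n : ℕ) : ℕ := ⌈((lam0 : ℝ)) ^ (b ^ n)⌉₊

/-- `r_n = λ_n^{-β}` -/
def rSeq (lam0 : ℕ) (b β : ℝ) (n : ℕ) : ℝ := ((lamSeq lam0 b n : ℝ)) ^ (-β)

/-- `μ_{n+1} = (λ_n λ_{n+1})^{1/2}` -/
def muSeq (lam0 : ℕ) (b : ℝ) (n : ℕ) : ℝ :=
  Real.sqrt ((lamSeq lam0 b n : ℝ) * (lamSeq lam0 b (n + 1) : ℝ))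

/-- smooth Fourier cutoff `P_{≤μ}` associated to a bump `ψ` -/
def Pcut (ψ : ℝ × ℝ → ℝ) (μ : ℝ) : (ℝ × ℝ → ℂ) → (ℝ × ℝ → ℂ) :=
  Tmult fun k => ((ψ ((k.1 : ℝ) / μ, (k.2 : ℝ) / μ) : ℝ) : ℂ)

/-- bilinear multiplier with symbol the Fourier transform of a kernel `K ∈ L¹(ℝ²×ℝ²)` -/
def mOf (K : (ℝ × ℝ) × (ℝ × ℝ) → ℂ) (ξ η : ℝ × ℝ) : ℂ :=
  ∫ z : (ℝ × ℝ) × (ℝ × ℝ),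
    K z * Complex.exp (-Complex.I * ((ξ.1 * z.1.1 + ξ.2 * z.1.2 + η.1 * z.2.1 + η.2 * z.2.2 : ℝ) : ℂ))

/-- the bilinear multiplier operator associated to a kernel `K ∈ L¹(ℝ²×ℝ²)` -/
def Tbil (K : (ℝ × ℝ) × (ℝ × ℝ) → ℂ) (f g : ℝ × ℝ → ℂ) : ℝ × ℝ → ℂ :=
  fun x => ∑' k : Z2,
    (∑' k' : Z2, mOf K (toR k') (toR (k - k')) * fCoeff f k' * fCoeff g (k - k'))
      * Complex.exp (Complex.I * (dotZ k x : ℝ))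

/-- Fourier coefficients of the commutator `[R_j, φ]θ`, computed from those of `φ` and `θ` -/
def commCoeff (j : Fin 2) (φh c : Z2 → ℂ) (k : Z2) : ℂ :=
  ∑' k' : Z2, (rieszSym j k - rieszSym j k') * φh (k - k') * c k'

/-!
The identities are checked on Fourier coefficients, which determine a smooth periodic function.
On these, `v·∇` acts as multiplication by `i k·v`, so (a) is the symbol identity
`∑ⱼ (k·lⱼ^⊥) (k·lⱼ) mⱼ(k) = |k|²`, where `mⱼ` is the symbol of `Rⱼ^o`. For (b), let `F` be the field
`∑ⱼ lⱼ^⊥ (lⱼ·∇)(Rⱼ^o Q)`. By (a), `F - ∇Q` is divergence free; having mean zero, it is `∇^⊥ p` with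
`p = Δ⁻¹ curl F`.
-/

open scoped Real ContDiff

/-! ### Smooth functions on the torus -/

lemma periodic2_iff {f : ℝ × ℝ → ℂ} :
    Periodic2 f ↔ Function.Periodic f (2 * π, 0) ∧ Function.Periodic f (0, 2 * π) := by
  simp only [Periodic2, Function.Periodic, Prod.add_def, add_zero, forall_and]

/-- The algebra `C^∞(𝕋²)` of smooth functions on the torus, realized as the smooth functions on
the plane that are `2π`-periodic in both variables. -/
def smoothPeriodic : Subalgebra ℂ (ℝ × ℝ → ℂ) where
  carrier := {f | ContDiff ℝ ∞ f ∧ Periodic2 f}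
  mul_mem' hf hg := ⟨hf.1.mul hg.1, fun x ↦
    ⟨congrArg₂ (· * ·) (hf.2 x).1 (hg.2 x).1, congrArg₂ (· * ·) (hf.2 x).2 (hg.2 x).2⟩⟩
  add_mem' hf hg := ⟨hf.1.add hg.1, fun x ↦
    ⟨congrArg₂ (· + ·) (hf.2 x).1 (hg.2 x).1, congrArg₂ (· + ·) (hf.2 x).2 (hg.2 x).2⟩⟩
  algebraMap_mem' _ := ⟨contDiff_const, fun _ ↦ ⟨rfl, rfl⟩⟩

variable {f g : ℝ × ℝ → ℂ}

lemma differentiable_of_mem_smoothPeriodic (hf : f ∈ smoothPeriodic) : Differentiable ℝ f :=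
  hf.1.differentiable (by simp)

lemma periodic_dirD {c : ℝ × ℝ} (hf : Function.Periodic f c) (v : ℝ × ℝ) :
    Function.Periodic (dirD v f) c := fun x ↦ by
  rw [dirD, dirD, ← fderiv_comp_add_right, hf.funext]

lemma dirD_mem_smoothPeriodic (hf : f ∈ smoothPeriodic) (v : ℝ × ℝ) :
    dirD v f ∈ smoothPeriodic := by
  have hp := periodic2_iff.1 hf.2
  exact ⟨(hf.1.fderiv_right (by simp)).clm_apply contDiff_const,
    periodic2_iff.2 ⟨periodic_dirD hp.1 v, periodic_dirD hp.2 v⟩⟩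

lemma pd_mem_smoothPeriodic (hf : f ∈ smoothPeriodic) (j : Fin 2) : pd j f ∈ smoothPeriodic :=
  dirD_mem_smoothPeriodic hf _

lemma dirD_eq_smul_pd (v : ℝ × ℝ) (f : ℝ × ℝ → ℂ) :
    dirD v f = (v.1 : ℂ) • pd 0 f + (v.2 : ℂ) • pd 1 f := by
  funext x
  have hv : v = v.1 • (1, 0) + v.2 • (0, 1) := by simp
  calc fderiv ℝ f x v = fderiv ℝ f x (v.1 • (1, 0) + v.2 • (0, 1)) := by rw [← hv]
    _ = v.1 • fderiv ℝ f x (1, 0) + v.2 • fderiv ℝ f x (0, 1) := by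
        rw [map_add, map_smul, map_smul]

lemma dirD_sub (hf : Differentiable ℝ f) (hg : Differentiable ℝ g) (v : ℝ × ℝ) :
    dirD v (f - g) = dirD v f - dirD v g := by
  funext x
  simp only [dirD, fderiv_sub (hf x) (hg x), sub_apply, Pi.sub_apply]

lemma dirD_sum_smul {ι : Type*} {s : Finset ι} {F : ι → ℝ × ℝ → ℂ}
    (hF : ∀ j ∈ s, Differentiable ℝ (F j)) (c : ι → ℂ) (v : ℝ × ℝ) :
    dirD v (∑ j ∈ s, c j • F j) = ∑ j ∈ s, c j • dirD v (F j) := by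
  funext x
  rw [dirD, fderiv_sum fun j hj ↦ (hF j hj x).const_smul (c j)]
  simp only [sum_apply, Finset.sum_apply, Pi.smul_apply, dirD]
  exact Finset.sum_congr rfl fun j hj ↦ by rw [fderiv_const_smul (hF j hj x), smul_apply]

lemma dirD_mul (hf : Differentiable ℝ f) (hg : Differentiable ℝ g) (v : ℝ × ℝ) :
    dirD v (f * g) = dirD v f * g + f * dirD v g := by
  funext x
  simp only [dirD, fderiv_mul (hf x) (hg x), add_apply, smul_apply, smul_eq_mul, Pi.add_apply,
    Pi.mul_apply]
  ring

lemma integrableOn_Q2 (hf : Continuous f) : IntegrableOn f Q2 :=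
  hf.continuousOn.integrableOn_compact isCompact_Icc

lemma integral_dirD_eq_zero (hf : f ∈ smoothPeriodic) (v : ℝ × ℝ) :
    ∫ x in Q2, dirD v f x = 0 := by
  have hdiv (x : ℝ × ℝ) :
      (v.1 • fderiv ℝ f x) (1, 0) + (v.2 • fderiv ℝ f x) (0, 1) = dirD v f x :=
    (congrFun (dirD_eq_smul_pd v f) x).symm
  have hderiv (a : ℝ) (x : ℝ × ℝ) :
      HasFDerivAt (fun y ↦ a • f y) (a • fderiv ℝ f x) x :=
    (differentiable_of_mem_smoothPeriodic hf x).hasFDerivAt.const_smul a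
  have hcont (a : ℝ) : ContinuousOn (fun y ↦ a • f y) (Set.Icc (-π, -π) (π, π)) :=
    (hf.1.continuous.const_smul a).continuousOn
  have hle : ((-π, -π) : ℝ × ℝ) ≤ (π, π) := by constructor <;> simp [Real.pi_nonneg]
  have hshift : -π + 2 * π = π := by ring
  have hfst (y : ℝ) : f (π, y) = f (-π, y) := by simpa [hshift] using (hf.2 (-π, y)).1
  have hsnd (y : ℝ) : f (y, π) = f (y, -π) := by simpa [hshift] using (hf.2 (y, -π)).2
  have hint : IntegrableOn (dirD v f) Q2 :=
    integrableOn_Q2 (dirD_mem_smoothPeriodic hf v).1.continuous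
  have h := integral_divergence_prod_Icc_of_hasFDerivAt_of_le (fun y ↦ v.1 • f y)
    (fun y ↦ v.2 • f y) (fun x ↦ v.1 • fderiv ℝ f x) (fun x ↦ v.2 • fderiv ℝ f x) _ _ hle
    (hcont _) (hcont _) (fun x _ ↦ hderiv _ x) (fun x _ ↦ hderiv _ x)
    (by simpa only [hdiv] using! hint)
  simpa only [hdiv, hfst, hsnd, sub_self, zero_add] using! h

/-! ### Plane waves -/

/-- The character `x ↦ e^{ik·x}` of the torus. -/
def planeWave (k : Z2) (x : ℝ × ℝ) : ℂ := exp (I * (dotZ k x : ℝ))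

/-- The map `dotZ k` as a continuous linear functional. -/
def dotCLM (k : Z2) : ℝ × ℝ →L[ℝ] ℝ :=
  (k.1 : ℝ) • ContinuousLinearMap.fst ℝ ℝ ℝ + (k.2 : ℝ) • ContinuousLinearMap.snd ℝ ℝ ℝ

lemma dotCLM_apply (k : Z2) (x : ℝ × ℝ) : dotCLM k x = dotZ k x := by simp [dotCLM, dotZ]

lemma abs_fst_le_norm (k : Z2) : |(k.1 : ℝ)| ≤ ‖k‖ := by
  simpa only [Int.norm_eq_abs] using norm_fst_le k

lemma abs_snd_le_norm (k : Z2) : |(k.2 : ℝ)| ≤ ‖k‖ := by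
  simpa only [Int.norm_eq_abs] using norm_snd_le k

lemma norm_dotCLM_le (k : Z2) : ‖dotCLM k‖ ≤ 2 * ‖k‖ := by
  calc ‖dotCLM k‖ ≤ |(k.1 : ℝ)| * ‖ContinuousLinearMap.fst ℝ ℝ ℝ‖
        + |(k.2 : ℝ)| * ‖ContinuousLinearMap.snd ℝ ℝ ℝ‖ :=
        (norm_add_le _ _).trans_eq (by simp only [norm_smul, Real.norm_eq_abs])
    _ ≤ ‖k‖ * 1 + ‖k‖ * 1 := by
        gcongr
        · exact abs_fst_le_norm k
        · exact ContinuousLinearMap.norm_fst_le ..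
        · exact abs_snd_le_norm k
        · exact ContinuousLinearMap.norm_snd_le ..
    _ = 2 * ‖k‖ := by ring

lemma norm_planeWave (k : Z2) (x : ℝ × ℝ) : ‖planeWave k x‖ = 1 := by
  rw [planeWave, norm_exp_I_mul_ofReal]

lemma planeWave_neg_mul_self (k : Z2) (x : ℝ × ℝ) : planeWave k x * planeWave (-k) x = 1 := by
  rw [planeWave, planeWave, ← exp_add, exp_eq_one_iff]
  exact ⟨0, by simp [dotZ]; ring⟩

lemma planeWave_eq_comp (k : Z2) :
    planeWave k = (fun t : ℝ ↦ exp (I * t)) ∘ dotCLM k := by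
  funext x
  rw [planeWave, Function.comp_apply, dotCLM_apply]

lemma hasDerivAt_exp_I_mul (t : ℝ) :
    HasDerivAt (fun t : ℝ ↦ exp (I * t)) (I * exp (I * t)) t := by
  simpa [mul_comm] using ((ofRealCLM.hasDerivAt (x := t)).const_mul I).cexp

lemma contDiff_exp_I_mul : ContDiff ℝ ∞ fun t : ℝ ↦ exp (I * t) :=
  (contDiff_const.mul ofRealCLM.contDiff).cexp

lemma iteratedDeriv_exp_I_mul (n : ℕ) :
    iteratedDeriv n (fun t : ℝ ↦ exp (I * t)) = fun t : ℝ ↦ I ^ n * exp (I * t) := by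
  induction n with
  | zero => simp
  | succ n ih =>
    funext t
    rw [iteratedDeriv_succ, ih, ((hasDerivAt_exp_I_mul t).const_mul (I ^ n)).deriv]
    ring

lemma norm_iteratedFDeriv_planeWave_le (n : ℕ) (k : Z2) (x : ℝ × ℝ) :
    ‖iteratedFDeriv ℝ n (planeWave k) x‖ ≤ (2 * ‖k‖) ^ n := by
  rw [planeWave_eq_comp, (dotCLM k).iteratedFDeriv_comp_right contDiff_exp_I_mul x
    (mod_cast le_top)]
  refine (ContinuousMultilinearMap.norm_compContinuousLinearMap_le _ _).trans ?_
  rw [norm_iteratedFDeriv_eq_norm_iteratedDeriv, iteratedDeriv_exp_I_mul, norm_mul, norm_pow,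
    norm_I, norm_exp_I_mul_ofReal, Finset.prod_const, Finset.card_univ, Fintype.card_fin]
  simpa using pow_le_pow_left₀ (norm_nonneg _) (norm_dotCLM_le k) n

lemma planeWave_mem_smoothPeriodic (k : Z2) : planeWave k ∈ smoothPeriodic := by
  refine ⟨?_, fun x ↦ ⟨?_, ?_⟩⟩
  · rw [planeWave_eq_comp]
    exact contDiff_exp_I_mul.comp (dotCLM k).contDiff
  · exact exp_eq_exp_iff_exists_int.2 ⟨k.1, by simp [dotZ]; ring⟩
  · exact exp_eq_exp_iff_exists_int.2 ⟨k.2, by simp [dotZ]; ring⟩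

lemma dirD_planeWave (k : Z2) (v : ℝ × ℝ) :
    dirD v (planeWave k) = (I * (dotZ k v : ℝ)) • planeWave k := by
  funext x
  have h := (hasDerivAt_exp_I_mul (dotCLM k x)).hasFDerivAt.comp x (dotCLM k).hasFDerivAt
  rw [← planeWave_eq_comp] at h
  rw [dirD, h.fderiv]
  simp [dotCLM_apply, planeWave]
  ring

/-! ### Fourier coefficients -/

lemma fCoeff_eq_integral_planeWave (f : ℝ × ℝ → ℂ) (k : Z2) :
    fCoeff f k = (1 / (2 * π) ^ 2 : ℂ) * ∫ x in Q2, f x * planeWave (-k) x := by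
  have h (x : ℝ × ℝ) : exp (-I * (dotZ k x : ℝ)) = planeWave (-k) x :=
    congrArg exp (by simp [dotZ]; ring)
  simp only [fCoeff, h]

lemma integrableOn_mul_planeWave (hf : Continuous f) (k : Z2) :
    IntegrableOn (fun x ↦ f x * planeWave k x) Q2 :=
  integrableOn_Q2 (hf.mul (planeWave_mem_smoothPeriodic k).1.continuous)

lemma fCoeff_add (hf : Continuous f) (hg : Continuous g) (k : Z2) :
    fCoeff (f + g) k = fCoeff f k + fCoeff g k := by
  simp only [fCoeff_eq_integral_planeWave, Pi.add_apply, add_mul]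
  rw [integral_add (integrableOn_mul_planeWave hf _) (integrableOn_mul_planeWave hg _), mul_add]

lemma fCoeff_smul (c : ℂ) (f : ℝ × ℝ → ℂ) (k : Z2) : fCoeff (c • f) k = c * fCoeff f k := by
  simp only [fCoeff, Pi.smul_apply, smul_eq_mul, mul_assoc, integral_const_mul]
  ring

lemma fCoeff_neg (f : ℝ × ℝ → ℂ) (k : Z2) : fCoeff (-f) k = -fCoeff f k := by
  rw [← neg_one_smul ℂ f, fCoeff_smul, neg_one_mul]

lemma fCoeff_sub (hf : Continuous f) (hg : Continuous g) (k : Z2) :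
    fCoeff (f - g) k = fCoeff f k - fCoeff g k := by
  rw [sub_eq_add_neg, fCoeff_add hf hg.neg, fCoeff_neg, sub_eq_add_neg]

lemma fCoeff_sum {ι : Type*} {s : Finset ι} {F : ι → ℝ × ℝ → ℂ}
    (hF : ∀ j ∈ s, Continuous (F j)) (k : Z2) :
    fCoeff (∑ j ∈ s, F j) k = ∑ j ∈ s, fCoeff (F j) k := by
  simp only [fCoeff_eq_integral_planeWave, Finset.sum_apply, Finset.sum_mul]
  rw [integral_finsetSum _ fun j hj ↦ integrableOn_mul_planeWave (hF j hj) _, Finset.mul_sum]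

lemma fCoeff_dirD (hf : f ∈ smoothPeriodic) (v : ℝ × ℝ) (k : Z2) :
    fCoeff (dirD v f) k = I * (dotZ k v : ℝ) * fCoeff f k := by
  have hk := planeWave_mem_smoothPeriodic (-k)
  have hdotZ : dotZ (-k) v = -dotZ k v := by simp [dotZ]; ring
  have hparts : dirD v (f * planeWave (-k)) =
      fun x ↦ dirD v f x * planeWave (-k) x - I * (dotZ k v : ℝ) * (f x * planeWave (-k) x) := by
    rw [dirD_mul (differentiable_of_mem_smoothPeriodic hf)
      (differentiable_of_mem_smoothPeriodic hk), dirD_planeWave, hdotZ]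
    funext x
    simp only [Pi.add_apply, Pi.mul_apply, Pi.smul_apply, smul_eq_mul, ofReal_neg]
    ring
  have hzero := integral_dirD_eq_zero (mul_mem hf hk) v
  simp only [hparts] at hzero
  rw [integral_sub (integrableOn_mul_planeWave (dirD_mem_smoothPeriodic hf v).1.continuous _)
    ((integrableOn_mul_planeWave hf.1.continuous _).const_mul _), integral_const_mul,
    sub_eq_zero] at hzero
  rw [fCoeff_eq_integral_planeWave, fCoeff_eq_integral_planeWave, hzero]
  ring

lemma fCoeff_zero_dirD (hf : f ∈ smoothPeriodic) (v : ℝ × ℝ) : fCoeff (dirD v f) 0 = 0 := by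
  simp [fCoeff_dirD hf, dotZ]

lemma fCoeff_pd_zero (hf : f ∈ smoothPeriodic) (k : Z2) :
    fCoeff (pd 0 f) k = I * k.1 * fCoeff f k := by
  change fCoeff (dirD (1, 0) f) k = _
  simp [fCoeff_dirD hf, dotZ]

lemma fCoeff_pd_one (hf : f ∈ smoothPeriodic) (k : Z2) :
    fCoeff (pd 1 f) k = I * k.2 * fCoeff f k := by
  change fCoeff (dirD (0, 1) f) k = _
  simp [fCoeff_dirD hf, dotZ]

lemma volume_real_Q2 : volume.real Q2 = (2 * π) ^ 2 := by
  rw [Q2, ← Set.Icc_prod_Icc, Measure.volume_eq_prod, measureReal_prod_prod,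
    Real.volume_real_Icc_of_le (by linarith [Real.pi_pos])]
  ring

lemma fCoeff_planeWave (n k : Z2) : fCoeff (planeWave n) k = if n = k then 1 else 0 := by
  split_ifs with h
  · subst h
    simp only [fCoeff_eq_integral_planeWave, planeWave_neg_mul_self, setIntegral_const,
      volume_real_Q2]
    simp [Real.pi_ne_zero]
  · -- If the coefficient were nonzero, differentiating `planeWave n` would give `n·v = k·v`.
    have hn := planeWave_mem_smoothPeriodic n
    by_contra hne
    have heq (v : ℝ × ℝ) : dotZ n v = dotZ k v := by
      have hv := fCoeff_dirD hn v k
      rw [dirD_planeWave, fCoeff_smul] at hv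
      exact ofReal_injective (mul_left_cancel₀ I_ne_zero (mul_right_cancel₀ hne hv))
    have hfst := heq (1, 0)
    have hsnd := heq (0, 1)
    simp only [dotZ, mul_one, mul_zero, add_zero, zero_add, Int.cast_inj] at hfst hsnd
    exact h (Prod.ext hfst hsnd)

/-- The trigonometric series with coefficients `c`. -/
def trigSeries (c : Z2 → ℂ) (x : ℝ × ℝ) : ℂ := ∑' k, c k * planeWave k x

lemma fCoeff_trigSeries {c : Z2 → ℂ} (hc : Summable c) (k : Z2) :
    fCoeff (trigSeries c) k = c k := by
  let F (n : Z2) (x : ℝ × ℝ) : ℂ := c n * planeWave n x * planeWave (-k) x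
  have hcont (n : Z2) : Continuous (F n) :=
    (((planeWave_mem_smoothPeriodic n).1.continuous.const_mul _).mul
      (planeWave_mem_smoothPeriodic (-k)).1.continuous)
  have hnorm (n : Z2) : ∫ x in Q2, ‖F n x‖ = volume.real Q2 * ‖c n‖ := by
    simp only [F, norm_mul, norm_planeWave, mul_one, setIntegral_const, smul_eq_mul]
  have hswap : ∑' n, ∫ x in Q2, F n x = ∫ x in Q2, ∑' n, F n x :=
    integral_tsum_of_summable_integral_norm (fun n ↦ integrableOn_Q2 (hcont n))
      (by simpa only [hnorm] using hc.norm.mul_left _)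
  calc fCoeff (trigSeries c) k = ∑' n, fCoeff (c n • planeWave n) k := by
        simp only [fCoeff_eq_integral_planeWave, trigSeries, ← tsum_mul_right, Pi.smul_apply,
          smul_eq_mul, tsum_mul_left]
        rw [← hswap]
    _ = ∑' n, c n * if n = k then 1 else 0 := by simp only [fCoeff_smul, fCoeff_planeWave]
    _ = c k := by simp only [mul_ite, mul_one, mul_zero, tsum_ite_eq]

/-! ### Rapidly decaying coefficients -/

/-- Coefficients that decay faster than any power of the frequency, such as the Fourier
coefficients of a smooth function. -/
def RapidDecay (c : Z2 → ℂ) : Prop := ∀ N : ℕ, Summable fun k ↦ ‖k‖ ^ N * ‖c k‖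

lemma RapidDecay.summable {c : Z2 → ℂ} (hc : RapidDecay c) : Summable c :=
  .of_norm (by simpa using hc 0)

lemma RapidDecay.mul_of_norm_le {c m : Z2 → ℂ} (hc : RapidDecay c) {C : ℝ} {M : ℕ}
    (hm : ∀ k, ‖m k‖ ≤ C * ‖k‖ ^ M) : RapidDecay fun k ↦ m k * c k := fun N ↦ by
  refine .of_nonneg_of_le (fun _ ↦ by positivity) (fun k ↦ ?_) ((hc (N + M)).mul_left C)
  calc ‖k‖ ^ N * ‖m k * c k‖ ≤ ‖k‖ ^ N * (C * ‖k‖ ^ M * ‖c k‖) := by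
        rw [norm_mul]
        gcongr
        exact hm k
    _ = C * (‖k‖ ^ (N + M) * ‖c k‖) := by ring

lemma trigSeries_mem_smoothPeriodic {c : Z2 → ℂ} (hc : RapidDecay c) :
    trigSeries c ∈ smoothPeriodic := by
  have hmode (k : Z2) : c k • planeWave k ∈ smoothPeriodic :=
    Subalgebra.smul_mem _ (planeWave_mem_smoothPeriodic k) _
  refine ⟨contDiff_tsum (v := fun n k ↦ 2 ^ n * (‖k‖ ^ n * ‖c k‖)) (fun k ↦ (hmode k).1)
    (fun n _ ↦ (hc n).mul_left _) fun n k x _ ↦ ?_, fun x ↦ ?_⟩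
  · change ‖iteratedFDeriv ℝ n (c k • planeWave k) x‖ ≤ _
    rw [iteratedFDeriv_const_smul_apply ((planeWave_mem_smoothPeriodic k).1.contDiffAt.of_le
      (mod_cast le_top)), norm_smul]
    calc ‖c k‖ * ‖iteratedFDeriv ℝ n (planeWave k) x‖ ≤ ‖c k‖ * (2 * ‖k‖) ^ n := by
          gcongr
          exact norm_iteratedFDeriv_planeWave_le n k x
      _ = 2 ^ n * (‖k‖ ^ n * ‖c k‖) := by ring
  · exact ⟨tsum_congr fun k ↦ ((hmode k).2 x).1, tsum_congr fun k ↦ ((hmode k).2 x).2⟩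

lemma summable_norm_rpow_neg_Z2 {r : ℝ} (hr : 2 < r) : Summable fun k : Z2 ↦ ‖k‖ ^ (-r) := by
  refine ((finTwoArrowEquiv ℤ).symm.summable_iff.2
    (EisensteinSeries.summable_one_div_norm_rpow hr)).congr fun k ↦ ?_
  simp [EisensteinSeries.norm_eq_max_natAbs, Prod.norm_def, Int.norm_eq_abs]

lemma exists_norm_fCoeff_le (f : ℝ × ℝ → ℂ) : ∃ C : ℝ, ∀ k, ‖fCoeff f k‖ ≤ C := by
  refine ⟨‖(1 / (2 * π) ^ 2 : ℂ)‖ * ∫ x in Q2, ‖f x‖, fun k ↦ ?_⟩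
  rw [fCoeff_eq_integral_planeWave, norm_mul]
  gcongr
  refine (norm_integral_le_integral_norm _).trans_eq ?_
  simp only [norm_mul, norm_planeWave, mul_one]

lemma exists_norm_pow_mul_norm_fCoeff_le (hf : f ∈ smoothPeriodic) (N : ℕ) :
    ∃ C : ℝ, ∀ k, ‖k‖ ^ N * ‖fCoeff f k‖ ≤ C := by
  induction N generalizing f with
  | zero => simpa using exists_norm_fCoeff_le f
  | succ N ih =>
    obtain ⟨C₀, h₀⟩ := ih (dirD_mem_smoothPeriodic hf (1, 0))
    obtain ⟨C₁, h₁⟩ := ih (dirD_mem_smoothPeriodic hf (0, 1))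
    refine ⟨C₀ + C₁, fun k ↦ ?_⟩
    have hk : ‖k‖ ≤ |(k.1 : ℝ)| + |(k.2 : ℝ)| := by
      simpa only [Prod.norm_def, Int.norm_eq_abs] using
        max_le_add_of_nonneg (abs_nonneg (k.1 : ℝ)) (abs_nonneg (k.2 : ℝ))
    calc ‖k‖ ^ (N + 1) * ‖fCoeff f k‖
        ≤ ‖k‖ ^ N * (|(k.1 : ℝ)| + |(k.2 : ℝ)|) * ‖fCoeff f k‖ := by
          rw [pow_succ]
          gcongr
      _ = ‖k‖ ^ N * ‖fCoeff (pd 0 f) k‖ + ‖k‖ ^ N * ‖fCoeff (pd 1 f) k‖ := by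
          simp only [fCoeff_pd_zero hf, fCoeff_pd_one hf, norm_mul, norm_I, one_mul, norm_intCast]
          ring
      _ ≤ C₀ + C₁ := add_le_add (h₀ k) (h₁ k)

lemma rapidDecay_fCoeff (hf : f ∈ smoothPeriodic) : RapidDecay (fCoeff f) := fun N ↦ by
  obtain ⟨C, hC⟩ := exists_norm_pow_mul_norm_fCoeff_le hf (N + 3)
  refine .of_norm_bounded_eventually
    ((summable_norm_rpow_neg_Z2 (r := 3) (by norm_num)).mul_left C) ?_
  filter_upwards [(Set.finite_singleton (0 : Z2)).compl_mem_cofinite] with k hk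
  have hk : 0 < ‖k‖ := norm_pos_iff.2 hk
  rw [Real.norm_of_nonneg (by positivity), Real.rpow_neg hk.le, ← div_eq_mul_inv,
    le_div_iff₀ (by positivity)]
  calc ‖k‖ ^ N * ‖fCoeff f k‖ * ‖k‖ ^ (3 : ℝ) = ‖k‖ ^ (N + 3) * ‖fCoeff f k‖ := by
        norm_cast
        ring
    _ ≤ C := hC k

/-! ### Fourier inversion -/

lemma Periodic2.add_zsmul (hf : Periodic2 f) (m n : ℤ) (x : ℝ × ℝ) :
    f (x + (2 * π) • ((m : ℝ), (n : ℝ))) = f x := by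
  have hp := periodic2_iff.1 hf
  have h := ((hp.1.zsmul m).add_period (hp.2.zsmul n)) x
  rw [← h]
  congr 1
  ext <;> simp <;> ring

lemma isQuotientMap_piMap_coe_unitAddCircle {ι : Type*} :
    Topology.IsQuotientMap (Pi.map fun (_ : ι) (t : ℝ) ↦ (t : UnitAddCircle)) :=
  (IsOpenQuotientMap.piMap fun _ ↦ QuotientAddGroup.isOpenQuotientMap_mk).isQuotientMap

lemma exists_lift_unitAddTorus (hf : Continuous f) (hp : Periodic2 f) :
    ∃ F : C(UnitAddTorus (Fin 2), ℂ), ∀ y : Fin 2 → ℝ,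
      F (fun i ↦ (y i : UnitAddCircle)) = f ((2 * π) • (y 0, y 1)) := by
  let q : C(Fin 2 → ℝ, UnitAddTorus (Fin 2)) :=
    ⟨_, isQuotientMap_piMap_coe_unitAddCircle.continuous⟩
  let g : C(Fin 2 → ℝ, ℂ) := ⟨fun y ↦ f ((2 * π) • (y 0, y 1)), by fun_prop⟩
  have hq : Topology.IsQuotientMap q := isQuotientMap_piMap_coe_unitAddCircle
  have hg : Function.FactorsThrough g q := by
    intro a b hab
    have hint (i : Fin 2) : ∃ n : ℤ, a i = b i + n := by
      obtain ⟨n, hn⟩ := (AddCircle.coe_eq_zero_iff 1).1 (sub_eq_zero.2 (congrFun hab i))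
      exact ⟨n, by rw [zsmul_one] at hn; linarith⟩
    obtain ⟨m, hm⟩ := hint 0
    obtain ⟨n, hn⟩ := hint 1
    calc f ((2 * π) • (a 0, a 1)) = f ((2 * π) • (b 0, b 1) + (2 * π) • ((m : ℝ), (n : ℝ))) := by
          rw [hm, hn, ← smul_add, Prod.mk_add_mk]
      _ = f ((2 * π) • (b 0, b 1)) := hp.add_zsmul m n _
  exact ⟨hq.lift g hg, fun y ↦ DFunLike.congr_fun (hq.lift_comp g hg) y⟩

lemma mFourier_coe_eq_planeWave (n : Fin 2 → ℤ) (y : Fin 2 → ℝ) :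
    UnitAddTorus.mFourier n (fun i ↦ (y i : UnitAddCircle)) =
      planeWave (n 0, n 1) ((2 * π) • (y 0, y 1)) := by
  simp only [UnitAddTorus.mFourier, ContinuousMap.coe_mk, Fin.prod_univ_two, fourier_coe_apply,
    planeWave, ← exp_add]
  congr 1
  simp [dotZ]
  ring

lemma Ioc_prod_Ioc_ae_eq_Q2 : Set.Ioc (-π) π ×ˢ Set.Ioc (-π) π =ᵐ[volume] Q2 := by
  rw [Q2, ← Set.Icc_prod_Icc]
  exact Measure.set_prod_ae_eq Ioc_ae_eq_Icc Ioc_ae_eq_Icc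

open scoped Pointwise in
lemma setIntegral_unit_box_comp_smul (h : ℝ × ℝ → ℂ) :
    ∫ y in {y : Fin 2 → ℝ | ∀ i, y i ∈ Set.Ioc (-(1 / 2) : ℝ) (-(1 / 2) + 1)},
      h ((2 * π) • (y 0, y 1)) = (1 / (2 * π) ^ 2 : ℂ) * ∫ x in Q2, h x := by
  let J : Set ℝ := Set.Ioc (-(1 / 2)) (-(1 / 2) + 1)
  have hpi : 0 < 2 * π := by positivity
  have hbox : {y : Fin 2 → ℝ | ∀ i, y i ∈ J} = MeasurableEquiv.finTwoArrow ⁻¹' J ×ˢ J := by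
    ext y
    simp only [Set.mem_ofPred_eq, Fin.forall_fin_two]
    rfl
  have hscale : (2 * π) • (J ×ˢ J) = Set.Ioc (-π) π ×ˢ Set.Ioc (-π) π := by
    rw [Set.smul_set_prod, LinearOrderedField.smul_Ioc hpi]
    congr 2 <;> simp <;> ring
  calc ∫ y in {y : Fin 2 → ℝ | ∀ i, y i ∈ J}, h ((2 * π) • (y 0, y 1))
      = ∫ z in J ×ˢ J, h ((2 * π) • z) := by
        rw [hbox]
        exact (volume_preserving_finTwoArrow ℝ).setIntegral_preimage_emb
          (MeasurableEquiv.measurableEmbedding _) (fun z ↦ h ((2 * π) • z)) _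
    _ = (1 / (2 * π) ^ 2 : ℂ) * ∫ x in Q2, h x := by
        rw [Measure.setIntegral_comp_smul_of_pos _ _ _ hpi, hscale,
          setIntegral_congr_set Ioc_prod_Ioc_ae_eq_Q2]
        simp

lemma mFourierCoeff_eq_fCoeff {F : UnitAddTorus (Fin 2) → ℂ}
    (hF : ∀ y : Fin 2 → ℝ, F (fun i ↦ (y i : UnitAddCircle)) = f ((2 * π) • (y 0, y 1)))
    (n : Fin 2 → ℤ) : UnitAddTorus.mFourierCoeff F n = fCoeff f (n 0, n 1) := by
  rw [UnitAddTorus.mFourierCoeff_eq_integral F n fun _ ↦ -(1 / 2), fCoeff_eq_integral_planeWave,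
    ← setIntegral_unit_box_comp_smul fun x ↦ f x * planeWave (-(n 0, n 1)) x]
  simp only [hF, mFourier_coe_eq_planeWave, smul_eq_mul, mul_comm (f _)]
  rfl

theorem trigSeries_fCoeff (hf : Continuous f) (hp : Periodic2 f) (hs : Summable (fCoeff f)) :
    trigSeries (fCoeff f) = f := by
  obtain ⟨F, hF⟩ := exists_lift_unitAddTorus hf hp
  have hcoeff := mFourierCoeff_eq_fCoeff hF
  have hsum : Summable (UnitAddTorus.mFourierCoeff F) :=
    ((finTwoArrowEquiv ℤ).summable_iff.2 hs).congr fun n ↦ (hcoeff n).symm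
  funext x
  let y : Fin 2 → ℝ := ![x.1 / (2 * π), x.2 / (2 * π)]
  have hy : (2 * π) • (y 0, y 1) = x := by ext <;> simp [y] <;> field_simp
  have h := UnitAddTorus.hasSum_mFourier_series_apply_of_summable hsum
    fun i ↦ (y i : UnitAddCircle)
  simp only [hF, mFourier_coe_eq_planeWave, hcoeff, hy, smul_eq_mul] at h
  rw [trigSeries, ← (finTwoArrowEquiv ℤ).tsum_eq]
  exact h.tsum_eq

lemma eq_of_fCoeff_eq (hf : f ∈ smoothPeriodic) (hg : g ∈ smoothPeriodic)
    (h : ∀ k, fCoeff f k = fCoeff g k) : f = g := by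
  rw [← trigSeries_fCoeff hf.1.continuous hf.2 (rapidDecay_fCoeff hf).summable,
    ← trigSeries_fCoeff hg.1.continuous hg.2 (rapidDecay_fCoeff hg).summable, funext h]

/-! ### Fourier multipliers -/

lemma Tmult_mem_smoothPeriodic (hf : f ∈ smoothPeriodic) {m : Z2 → ℂ} {C : ℝ} {M : ℕ}
    (hm : ∀ k, ‖m k‖ ≤ C * ‖k‖ ^ M) : Tmult m f ∈ smoothPeriodic :=
  trigSeries_mem_smoothPeriodic ((rapidDecay_fCoeff hf).mul_of_norm_le hm)

lemma fCoeff_Tmult (hf : f ∈ smoothPeriodic) {m : Z2 → ℂ} {C : ℝ} {M : ℕ}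
    (hm : ∀ k, ‖m k‖ ≤ C * ‖k‖ ^ M) (k : Z2) : fCoeff (Tmult m f) k = m k * fCoeff f k :=
  fCoeff_trigSeries ((rapidDecay_fCoeff hf).mul_of_norm_le hm).summable k

theorem sum_dirD_dirD_Tmult_eq_laplacian {ι : Type*} [Fintype ι] {u l : ι → ℝ × ℝ}
    {m : ι → Z2 → ℂ} {C : ℝ} {M : ℕ} (hm : ∀ j k, ‖m j k‖ ≤ C * ‖k‖ ^ M)
    (hsymbol : ∀ k : Z2, ∑ j, (dotZ k (u j) * dotZ k (l j) : ℝ) * m j k = k.1 ^ 2 + k.2 ^ 2)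
    (hf : f ∈ smoothPeriodic) :
    ∑ j, dirD (u j) (dirD (l j) (Tmult (m j) f)) = pd 0 (pd 0 f) + pd 1 (pd 1 f) := by
  have hT (j : ι) := Tmult_mem_smoothPeriodic hf (hm j)
  have hTl (j : ι) := dirD_mem_smoothPeriodic (hT j) (l j)
  have hTul (j : ι) := dirD_mem_smoothPeriodic (hTl j) (u j)
  have h₀ := pd_mem_smoothPeriodic hf 0
  have h₁ := pd_mem_smoothPeriodic hf 1
  have h₀₀ := pd_mem_smoothPeriodic h₀ 0
  have h₁₁ := pd_mem_smoothPeriodic h₁ 1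
  refine eq_of_fCoeff_eq (sum_mem fun j _ ↦ hTul j) (add_mem h₀₀ h₁₁) fun k ↦ ?_
  calc fCoeff (∑ j, dirD (u j) (dirD (l j) (Tmult (m j) f))) k
      = I ^ 2 * (∑ j, (dotZ k (u j) * dotZ k (l j) : ℝ) * m j k) * fCoeff f k := by
        rw [fCoeff_sum fun j _ ↦ (hTul j).1.continuous, Finset.mul_sum, Finset.sum_mul]
        refine Finset.sum_congr rfl fun j _ ↦ ?_
        rw [fCoeff_dirD (hTl j), fCoeff_dirD (hT j), fCoeff_Tmult hf (hm j), ofReal_mul]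
        ring
    _ = fCoeff (pd 0 (pd 0 f) + pd 1 (pd 1 f)) k := by
        rw [hsymbol, fCoeff_add h₀₀.1.continuous h₁₁.1.continuous, fCoeff_pd_zero h₀,
          fCoeff_pd_zero hf, fCoeff_pd_one h₁, fCoeff_pd_one hf]
        ring

lemma pd_zero_sum_add_pd_one_sum {ι : Type*} [Fintype ι] (u : ι → ℝ × ℝ) {F : ι → ℝ × ℝ → ℂ}
    (hF : ∀ j, Differentiable ℝ (F j)) :
    pd 0 (∑ j, ((u j).1 : ℂ) • F j) + pd 1 (∑ j, ((u j).2 : ℂ) • F j) =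
      ∑ j, dirD (u j) (F j) := by
  have hlin (i : Fin 2) (a : ι → ℂ) : pd i (∑ j, a j • F j) = ∑ j, a j • pd i (F j) :=
    dirD_sum_smul (fun j _ ↦ hF j) a _
  rw [hlin, hlin, ← Finset.sum_add_distrib]
  exact Finset.sum_congr rfl fun j _ ↦ (dirD_eq_smul_pd (u j) (F j)).symm

/-! ### Helmholtz decomposition -/

lemma fst_sq_add_snd_sq_pos {k : Z2} (hk : k ≠ 0) : 0 < (k.1 : ℝ) ^ 2 + (k.2 : ℝ) ^ 2 := by
  have h : k.1 ≠ 0 ∨ k.2 ≠ 0 := by simpa [Prod.ext_iff, or_iff_not_imp_left] using hk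
  rcases h with h | h <;> positivity

lemma knorm_sq (k : Z2) : knorm k ^ 2 = (k.1 : ℝ) ^ 2 + (k.2 : ℝ) ^ 2 :=
  Real.sq_sqrt (by positivity)

lemma norm_deltaInvSym_le_one (k : Z2) : ‖deltaInvSym k‖ ≤ 1 := by
  rw [deltaInvSym]
  split_ifs with hk
  · simp
  · have hpos := fst_sq_add_snd_sq_pos hk
    have hone : (1 : ℝ) ≤ (k.1 : ℝ) ^ 2 + (k.2 : ℝ) ^ 2 := by exact_mod_cast hpos
    rw [knorm_sq, norm_div, norm_neg, norm_one, norm_real,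
      Real.norm_of_nonneg hpos.le]
    exact div_le_one_of_le₀ hone hpos.le

lemma deltaInvSym_mul_sq {k : Z2} (hk : k ≠ 0) :
    deltaInvSym k * ((k.1 : ℂ) ^ 2 + (k.2 : ℂ) ^ 2) = -1 := by
  have hne : (k.1 : ℂ) ^ 2 + (k.2 : ℂ) ^ 2 ≠ 0 := by
    exact_mod_cast (fst_sq_add_snd_sq_pos hk).ne'
  rw [deltaInvSym, if_neg hk, knorm_sq]
  push_cast
  field_simp

theorem exists_eq_perpGrad_of_div_eq_zero (hf : f ∈ smoothPeriodic) (hg : g ∈ smoothPeriodic)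
    (hf₀ : fCoeff f 0 = 0) (hg₀ : fCoeff g 0 = 0) (hdiv : pd 0 f + pd 1 g = 0) :
    ∃ p ∈ smoothPeriodic, f = -pd 1 p ∧ g = pd 0 p := by
  have hcurl := sub_mem (pd_mem_smoothPeriodic hg 0) (pd_mem_smoothPeriodic hf 1)
  have hsymbol (k : Z2) : ‖deltaInvSym k‖ ≤ 1 * ‖k‖ ^ 0 := by
    simpa using norm_deltaInvSym_le_one k
  let p := Tmult deltaInvSym (pd 0 g - pd 1 f)
  have hp : p ∈ smoothPeriodic := Tmult_mem_smoothPeriodic hcurl hsymbol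
  have hp_coeff (k : Z2) :
      fCoeff p k = deltaInvSym k * (I * k.1 * fCoeff g k - I * k.2 * fCoeff f k) := by
    rw [fCoeff_Tmult hcurl hsymbol, fCoeff_sub (pd_mem_smoothPeriodic hg 0).1.continuous
      (pd_mem_smoothPeriodic hf 1).1.continuous, fCoeff_pd_zero hg, fCoeff_pd_one hf]
  have hdiv_coeff (k : Z2) : k.1 * fCoeff f k + k.2 * fCoeff g k = 0 := by
    have h : fCoeff (pd 0 f + pd 1 g) k = 0 := by rw [hdiv]; simp [fCoeff]
    rw [fCoeff_add (pd_mem_smoothPeriodic hf 0).1.continuous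
      (pd_mem_smoothPeriodic hg 1).1.continuous, fCoeff_pd_zero hf, fCoeff_pd_one hg] at h
    exact (mul_eq_zero.1 (show I * (k.1 * fCoeff f k + k.2 * fCoeff g k) = 0 by
      linear_combination h)).resolve_left I_ne_zero
  refine ⟨p, hp, eq_of_fCoeff_eq hf (neg_mem (pd_mem_smoothPeriodic hp 1)) fun k ↦ ?_,
    eq_of_fCoeff_eq hg (pd_mem_smoothPeriodic hp 0) fun k ↦ ?_⟩
  · rw [fCoeff_neg, fCoeff_pd_one hp, hp_coeff]
    rcases eq_or_ne k 0 with rfl | hk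
    · simp [hf₀]
    · linear_combination fCoeff f k * deltaInvSym_mul_sq hk - deltaInvSym k * k.1 * hdiv_coeff k
        + deltaInvSym k * k.2 * (k.1 * fCoeff g k - k.2 * fCoeff f k) * I_sq
  · rw [fCoeff_pd_zero hp, hp_coeff]
    rcases eq_or_ne k 0 with rfl | hk
    · simp [hg₀]
    · linear_combination fCoeff g k * deltaInvSym_mul_sq hk - deltaInvSym k * k.2 * hdiv_coeff k
        - deltaInvSym k * k.1 * (k.1 * fCoeff g k - k.2 * fCoeff f k) * I_sq

theorem exists_eq_grad_add_perpGrad {q : ℝ × ℝ → ℂ} (hf : f ∈ smoothPeriodic)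
    (hg : g ∈ smoothPeriodic) (hq : q ∈ smoothPeriodic) (hf₀ : fCoeff f 0 = 0)
    (hg₀ : fCoeff g 0 = 0) (hdiv : pd 0 f + pd 1 g = pd 0 (pd 0 q) + pd 1 (pd 1 q)) :
    ∃ p ∈ smoothPeriodic, f = pd 0 q - pd 1 p ∧ g = pd 1 q + pd 0 p := by
  have hsub (i : Fin 2) {F : ℝ × ℝ → ℂ} (hF : F ∈ smoothPeriodic) :
      pd i (F - pd i q) = pd i F - pd i (pd i q) :=
    dirD_sub (differentiable_of_mem_smoothPeriodic hF)
      (differentiable_of_mem_smoothPeriodic (pd_mem_smoothPeriodic hq i)) _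
  have hmean (i : Fin 2) {F : ℝ × ℝ → ℂ} (hF : F ∈ smoothPeriodic) (hF₀ : fCoeff F 0 = 0) :
      fCoeff (F - pd i q) 0 = 0 := by
    rw [fCoeff_sub hF.1.continuous (pd_mem_smoothPeriodic hq i).1.continuous, hF₀, zero_sub,
      neg_eq_zero]
    exact fCoeff_zero_dirD hq _
  have hdiv₀ : pd 0 (f - pd 0 q) + pd 1 (g - pd 1 q) = 0 := by
    rw [hsub 0 hf, hsub 1 hg, sub_add_sub_comm, hdiv, sub_self]
  obtain ⟨p, hp, h₀, h₁⟩ := exists_eq_perpGrad_of_div_eq_zero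
    (sub_mem hf (pd_mem_smoothPeriodic hq 0)) (sub_mem hg (pd_mem_smoothPeriodic hq 1))
    (hmean 0 hf hf₀) (hmean 1 hg hg₀) hdiv₀
  exact ⟨p, hp, by rw [sub_eq_add_neg, ← h₀, add_sub_cancel], by rw [← h₁, add_sub_cancel]⟩

theorem exists_sum_smul_dirD_Tmult_eq {ι : Type*} [Fintype ι] {u l : ι → ℝ × ℝ}
    {m : ι → Z2 → ℂ} {C : ℝ} {M : ℕ} (hm : ∀ j k, ‖m j k‖ ≤ C * ‖k‖ ^ M)
    (hsymbol : ∀ k : Z2, ∑ j, (dotZ k (u j) * dotZ k (l j) : ℝ) * m j k = k.1 ^ 2 + k.2 ^ 2)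
    (hf : f ∈ smoothPeriodic) :
    ∃ p ∈ smoothPeriodic,
      ∑ j, ((u j).1 : ℂ) • dirD (l j) (Tmult (m j) f) = pd 0 f - pd 1 p ∧
      ∑ j, ((u j).2 : ℂ) • dirD (l j) (Tmult (m j) f) = pd 1 f + pd 0 p := by
  have hT (j : ι) := Tmult_mem_smoothPeriodic hf (hm j)
  have hTl (j : ι) := dirD_mem_smoothPeriodic (hT j) (l j)
  have hmem (a : ι → ℂ) : ∑ j, a j • dirD (l j) (Tmult (m j) f) ∈ smoothPeriodic :=
    sum_mem fun j _ ↦ Subalgebra.smul_mem _ (hTl j) _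
  have hmean (a : ι → ℂ) : fCoeff (∑ j, a j • dirD (l j) (Tmult (m j) f)) 0 = 0 := by
    rw [fCoeff_sum fun j _ ↦ (hTl j).1.continuous.const_smul (a j)]
    simp only [fCoeff_smul, fCoeff_zero_dirD (hT _), mul_zero, Finset.sum_const_zero]
  refine exists_eq_grad_add_perpGrad (hmem _) (hmem _) hf (hmean _) (hmean _) ?_
  rw [pd_zero_sum_add_pd_one_sum u fun j ↦ differentiable_of_mem_smoothPeriodic (hTl j),
    sum_dirD_dirD_Tmult_eq_laplacian hm hsymbol hf]

/-! ### The symbols `R_j^o` -/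

lemma norm_RoSym_le (j : Fin 2) (k : Z2) : ‖(RoSym j k : ℂ)‖ ≤ 5 * ‖k‖ ^ 0 := by
  rw [pow_zero, mul_one, norm_real, Real.norm_eq_abs, RoSym]
  split_ifs with hk hj
  · simp
  · have hpos := fst_sq_add_snd_sq_pos hk
    rw [abs_le, le_div_iff₀ (by positivity), div_le_iff₀ (by positivity)]
    constructor <;> nlinarith
  · have hpos := fst_sq_add_snd_sq_pos hk
    rw [← mul_div_mul_left (4 * (k.1 : ℝ) * k.2) _ (show (12 : ℝ) ≠ 0 by norm_num), ← add_div,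
      abs_le, le_div_iff₀ (by positivity), div_le_iff₀ (by positivity)]
    constructor <;> nlinarith [sq_nonneg ((k.1 : ℝ) + k.2), sq_nonneg ((k.1 : ℝ) - k.2)]

lemma sum_dotZ_perp_mul_dotZ_mul_RoSym (k : Z2) :
    ∑ j, (dotZ k (![perp l1, perp l2] j) * dotZ k (![l1, l2] j) : ℝ) * (RoSym j k : ℂ) =
      k.1 ^ 2 + k.2 ^ 2 := by
  have hreal : dotZ k (perp l1) * dotZ k l1 * RoSym 0 k +
      dotZ k (perp l2) * dotZ k l2 * RoSym 1 k = (k.1 : ℝ) ^ 2 + (k.2 : ℝ) ^ 2 := by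
    rcases eq_or_ne k 0 with rfl | hk
    · simp [RoSym]
    · have hpos := fst_sq_add_snd_sq_pos hk
      simp only [RoSym, hk, if_false, if_true, one_ne_zero, dotZ, perp, l1, l2]
      field_simp
      ring
  rw [Fin.sum_univ_two]
  exact_mod_cast hreal

theorem stmt6_general (Q : ℝ × ℝ → ℂ) (hQ : ContDiff ℝ (⊤ : ℕ∞) Q) (hQp : Periodic2 Q) :
    (∀ x, dirD (perp l1) (dirD l1 (Ro 0 Q)) x + dirD (perp l2) (dirD l2 (Ro 1 Q)) x
        = pd 0 (pd 0 Q) x + pd 1 (pd 1 Q) x) ∧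
    ∃ p : ℝ × ℝ → ℂ, ContDiff ℝ (⊤ : ℕ∞) p ∧ Periodic2 p ∧
      ∀ x : ℝ × ℝ,
        ((perp l1).1 : ℂ) * dirD l1 (Ro 0 Q) x + ((perp l2).1 : ℂ) * dirD l2 (Ro 1 Q) x
          = pd 0 Q x + -(pd 1 p x) ∧
        ((perp l1).2 : ℂ) * dirD l1 (Ro 0 Q) x + ((perp l2).2 : ℂ) * dirD l2 (Ro 1 Q) x
          = pd 1 Q x + pd 0 p x := by
  have hmem : Q ∈ smoothPeriodic := ⟨hQ, hQp⟩
  have hlap := sum_dirD_dirD_Tmult_eq_laplacian norm_RoSym_le sum_dotZ_perp_mul_dotZ_mul_RoSym hmem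
  obtain ⟨p, hp, h₀, h₁⟩ :=
    exists_sum_smul_dirD_Tmult_eq norm_RoSym_le sum_dotZ_perp_mul_dotZ_mul_RoSym hmem
  rw [Fin.sum_univ_two] at hlap h₀ h₁
  exact ⟨congrFun hlap, p, hp.1, hp.2, fun x ↦
    ⟨(congrFun h₀ x).trans (sub_eq_add_neg _ _), congrFun h₁ x⟩⟩

/-- Algebraic Lemma 2.2: for smooth mean-zero `Q`,
(a) `∑_j (l_j^⊥·∇)(l_j·∇)(R_j^o Q) = ΔQ`, and consequently
(b) `∑_j l_j^⊥ (l_j·∇)(R_j^o Q) = ∇Q + ∇^⊥ p` for some smooth scalar `p`. -/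
theorem stmt6 (Q : ℝ × ℝ → ℂ) (hQ : ContDiff ℝ (⊤ : ℕ∞) Q) (hQp : Periodic2 Q)
    (hQr : RealValued Q) (hQ0 : fCoeff Q 0 = 0) :
    (∀ x, dirD (perp l1) (dirD l1 (Ro 0 Q)) x + dirD (perp l2) (dirD l2 (Ro 1 Q)) x
        = pd 0 (pd 0 Q) x + pd 1 (pd 1 Q) x) ∧
    ∃ p : ℝ × ℝ → ℂ, ContDiff ℝ (⊤ : ℕ∞) p ∧ Periodic2 p ∧
      ∀ x : ℝ × ℝ,
        ((perp l1).1 : ℂ) * dirD l1 (Ro 0 Q) x + ((perp l2).1 : ℂ) * dirD l2 (Ro 1 Q) x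
          = pd 0 Q x + -(pd 1 p x) ∧
        ((perp l1).2 : ℂ) * dirD l1 (Ro 0 Q) x + ((perp l2).2 : ℂ) * dirD l2 (Ro 1 Q) x
          = pd 1 Q x + pd 0 p x :=
  stmt6_general Q hQ hQp

end
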